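/- arXiv:2402.16710 — 3 statements merged into one kernel-verified Lean document; each statement's English description precedes it below -/
import Mathlib

section
/- Let K ≥ 2, let μ : {1,…,K} → ℝ satisfy μ₁ > μ₂ ≥ ⋯ ≥ μ_K, and let c : {1,…,K} → ℝ with c_a > 0 for all a. Set Δ_a = μ₁ − μ_a, x_a(y) = 2y/(Δ_a² − 2y), m_a(y) = (μ₁ + x_a(y)μ_a)/(1 + x_a(y)), F(y) = Σ_{a=2}^K (c_a/c₁)·(μ₁ − m_a(y))²/(μ_a − m_a(y))², and let y* ∈ (0, Δ₂²/2) be the unique solution of F(y*) = 1. Define S = c₁ + Σ_{a=2}^K c_a x_a(y*), w₁* = c₁/S, and w_a* = c_a x_a(y*)/S for a ≥ 2. Then w* ∈ Σ_K and w* maximizes over Σ_K the function w ↦ min_{a≠1} ( w₁·w_a/(c_a·w₁ + c₁·w_a) )·Δ_a²/2 (with the convention that a term equals 0 when its denominator vanishes). (Gaussian specialization of Theorem 10: the optimal cost proportions w*(μ,c) achieving T*(μ)⁻¹ are given in closed form through y*.) -/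
/-- Gaussian specialization of Theorem 10. Arm `0` plays the
role of arm 1 (the best arm) and arm `1` the role of arm 2. Given the
unique root `y*` of `F(y*) = 1`, the proportions
`w₁* = c₀/S`, `w_a* = c_a x_a(y*)/S` with `S = c₀ + Σ_{a≠0} c_a x_a(y*)`
lie in the simplex and maximize
`w ↦ min_{a≠0} (w₀ w_a/(c_a w₀ + c₀ w_a))·Δ_a²/2` over the simplex
(with the convention that a term is `0` when its denominator vanishes). -/
theorem optimal_proportions_closed_form
    (K : ℕ) [NeZero K] (hK : 2 ≤ K)
    (μ c : Fin K → ℝ)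
    (hc : ∀ a, 0 < c a)
    (h12 : μ 1 < μ 0)
    (hmono : ∀ a b : Fin K, 1 ≤ a → a ≤ b → μ b ≤ μ a)
    (ystar : ℝ) :
    let Δ : Fin K → ℝ := fun a => μ 0 - μ a
    let x : Fin K → ℝ → ℝ := fun a y => 2 * y / ((Δ a) ^ 2 - 2 * y)
    let m : Fin K → ℝ → ℝ := fun a y => (μ 0 + x a y * μ a) / (1 + x a y)
    let F : ℝ → ℝ := fun y =>
      ∑ a ∈ Finset.univ.erase 0, (c a / c 0) * (μ 0 - m a y) ^ 2 / (μ a - m a y) ^ 2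
    let S : ℝ := c 0 + ∑ a ∈ Finset.univ.erase 0, c a * x a ystar
    let wstar : Fin K → ℝ := fun a => if a = 0 then c 0 / S else c a * x a ystar / S
    let obj : (Fin K → ℝ) → ℝ := fun w =>
      sInf {v : ℝ | ∃ a, a ≠ 0 ∧
        v = if c a * w 0 + c 0 * w a = 0 then 0
            else (w 0 * w a / (c a * w 0 + c 0 * w a)) * (Δ a) ^ 2 / 2}
    ystar ∈ Set.Ioo 0 ((Δ 1) ^ 2 / 2) → F ystar = 1 →
      (∀ a, 0 ≤ wstar a) ∧ (∑ a, wstar a) = 1 ∧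
      ∀ w : Fin K → ℝ, (∀ a, 0 ≤ w a) → (∑ a, w a) = 1 → obj w ≤ obj wstar := by
  intro Δ x m F S wstar obj hy hF
  obtain ⟨hy0, hy1⟩ := hy
  have h10 : (1 : Fin K) ≠ 0 := by
    intro h
    have := congrArg Fin.val h
    rw [Fin.val_one', Fin.val_zero, Nat.mod_eq_of_lt (by omega)] at this
    omega
  have hge : ∀ a : Fin K, a ≠ 0 → 1 ≤ a := by
    intro a ha
    rw [Fin.le_def, Fin.val_one', Nat.mod_eq_of_lt (by omega)]
    have : a.val ≠ 0 := fun h => ha (Fin.ext (by simpa using h))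
    omega
  have hΔ1 : 0 < Δ 1 := sub_pos.2 h12
  have hΔ : ∀ a : Fin K, a ≠ 0 → 0 < Δ a ∧ 2 * ystar < Δ a ^ 2 := by
    intro a ha
    have h := hmono 1 a le_rfl (hge a ha)
    have h' : Δ 1 ≤ Δ a := by simp only [Δ]; linarith
    exact ⟨by linarith, by nlinarith⟩
  have hx : ∀ a : Fin K, a ≠ 0 → 0 < x a ystar ∧
      x a ystar * (Δ a ^ 2) = 2 * ystar * (1 + x a ystar) := by
    intro a ha
    obtain ⟨h1, h2⟩ := hΔ a ha
    have h3 : 0 < Δ a ^ 2 - 2 * ystar := by linarith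
    refine ⟨by simp only [x]; positivity, ?_⟩
    simp only [x]
    field_simp
    ring
  have hF' : ∑ a ∈ Finset.univ.erase 0, c a * x a ystar ^ 2 = c 0 := by
    have h : F ystar = (∑ a ∈ Finset.univ.erase 0, c a * x a ystar ^ 2) / c 0 := by
      rw [Finset.sum_div]
      refine Finset.sum_congr rfl fun a ha => ?_
      have ha := Finset.ne_of_mem_erase ha
      obtain ⟨h1, -⟩ := hΔ a ha
      obtain ⟨h2, -⟩ := hx a ha
      have e1 : μ 0 - m a ystar = x a ystar * Δ a / (1 + x a ystar) := by
        simp only [m, Δ]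
        generalize x a ystar = z at *
        field_simp
        ring
      have e2 : μ a - m a ystar = - Δ a / (1 + x a ystar) := by
        simp only [m, Δ]
        generalize x a ystar = z at *
        field_simp
        ring
      have := hc 0
      rw [e1, e2]
      generalize x a ystar = z at *
      generalize Δ a = d at *
      field_simp
    rw [hF, eq_div_iff (hc 0).ne'] at h
    linarith
  have hSum : ∑ a ∈ Finset.univ.erase 0, c a * x a ystar = S - c 0 := by
    simp only [S]; ring
  have hS : 0 < S := by
    have : 0 ≤ ∑ a ∈ Finset.univ.erase 0, c a * x a ystar :=
      Finset.sum_nonneg fun a ha =>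
        (mul_pos (hc a) (hx a (Finset.ne_of_mem_erase ha)).1).le
    have := hc 0
    linarith
  have hw0 : wstar 0 = c 0 / S := by simp [wstar]
  have hwa : ∀ a, a ≠ 0 → wstar a = c a * x a ystar / S := by
    intro a ha; simp [wstar, ha]
  have hobj : ystar / S ≤ obj wstar := by
    refine le_csInf ⟨_, 1, h10, rfl⟩ ?_
    rintro v ⟨a, ha, rfl⟩
    obtain ⟨h1, h2⟩ := hx a ha
    have hca := hc a
    have hc0 := hc 0
    rw [hw0, hwa a ha]
    generalize x a ystar = z at *
    have hne : c a * (c 0 / S) + c 0 * (c a * z / S) ≠ 0 := by positivity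
    rw [if_neg hne]
    have e : c 0 / S * (c a * z / S) / (c a * (c 0 / S) + c 0 * (c a * z / S))
        = z / ((1 + z) * S) := by
      field_simp
    rw [e]
    apply le_of_eq
    have e3 : z / ((1 + z) * S) * Δ a ^ 2 / 2 = (z * Δ a ^ 2) / ((1 + z) * S * 2) := by
      rw [div_mul_eq_mul_div, div_div]
    rw [e3, h2]
    field_simp
  refine ⟨?_, ?_, ?_⟩
  · intro a
    by_cases ha : a = 0
    · subst ha; rw [hw0]; exact (div_pos (hc 0) hS).le
    · rw [hwa a ha]; exact (div_pos (mul_pos (hc a) (hx a ha).1) hS).le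
  · rw [← Finset.add_sum_erase _ _ (Finset.mem_univ (0 : Fin K)), hw0,
      Finset.sum_congr rfl fun a ha => hwa a (Finset.ne_of_mem_erase ha),
      ← Finset.sum_div, hSum]
    field_simp
    ring
  · intro w hw hw1
    refine le_trans ?_ hobj
    rw [le_div_iff₀ hS]
    have key : ∀ a ∈ Finset.univ.erase (0 : Fin K),
        obj w * (c a * x a ystar + c a * x a ystar ^ 2) ≤
          ystar * ((c a * x a ystar ^ 2) * (w 0 / c 0) + w a) := by
      intro a ha
      have ha := Finset.ne_of_mem_erase ha
      obtain ⟨h1, h2⟩ := hx a ha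
      have hca := hc a
      have hc0 := hc 0
      have p0 := hw 0
      have pa := hw a
      have hle : obj w ≤ if c a * w 0 + c 0 * w a = 0 then 0
            else (w 0 * w a / (c a * w 0 + c 0 * w a)) * (Δ a) ^ 2 / 2 := by
        refine csInf_le ⟨0, ?_⟩ ⟨a, ha, rfl⟩
        rintro v ⟨b, hb, rfl⟩
        have := hc b
        have := hw b
        split_ifs
        · exact le_rfl
        · positivity
      generalize x a ystar = z at *
      refine (mul_le_mul_of_nonneg_right hle (by positivity)).trans ?_
      split_ifs with h0
      · rw [zero_mul]; positivity
      · have hpos : 0 < c a * w 0 + c 0 * w a := lt_of_le_of_ne (by positivity) (Ne.symm h0)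
        have e : w 0 * w a / (c a * w 0 + c 0 * w a) * Δ a ^ 2 / 2 * (c a * z + c a * z ^ 2)
            = ystar * (w 0 * w a * c a * (1 + z) ^ 2 / (c a * w 0 + c 0 * w a)) := by
          have : w 0 * w a / (c a * w 0 + c 0 * w a) * Δ a ^ 2 / 2 * (c a * z + c a * z ^ 2)
            = w 0 * w a / (c a * w 0 + c 0 * w a) / 2 * c a * (1 + z) * (z * Δ a ^ 2) := by
              ring
          rw [this, h2]; ring
        rw [e]
        refine mul_le_mul_of_nonneg_left ?_ hy0.le
        rw [div_le_iff₀ hpos]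
        obtain ⟨p, hp⟩ : ∃ p, w 0 = c 0 * p := ⟨w 0 / c 0, by field_simp⟩
        obtain ⟨q, hq⟩ : ∃ q, w a = c a * q := ⟨w a / c a, by field_simp⟩
        rw [hp, hq, mul_div_cancel_left₀ _ hc0.ne']
        have : 0 ≤ c a ^ 2 * c 0 * (z * p - q) ^ 2 := by positivity
        nlinarith
    have hs := Finset.sum_le_sum key
    rw [← Finset.mul_sum, ← Finset.mul_sum, Finset.sum_add_distrib, Finset.sum_add_distrib,
      ← Finset.sum_mul, hF', hSum, mul_div_cancel₀ _ (hc 0).ne',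
      Finset.add_sum_erase _ _ (Finset.mem_univ (0 : Fin K)), hw1] at hs
    linarith
end

section
/- Let K ≥ 2 and let c₁,…,c_K > 0. For each a ∈ {2,…,K} let g_a : [0,∞) → ℝ be a continuous, strictly increasing function with g_a(0) = 0. Suppose x* = (x₂*,…,x_K*) ∈ [0,∞)^{K−1} is a maximizer over [0,∞)^{K−1} of the function Φ(x) = ( min_{a≠1} g_a(x_a) ) / ( c₁ + c₂x₂ + ⋯ + c_Kx_K ). Then g_a(x_a*) = g_b(x_b*) for all a, b ∈ {2,…,K}. (Lemma 9: at the optimum of the reparameterized sup-inf problem, all the functions g_a are equalized.) -/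
/-- Lemma 9: at a maximizer of the reparameterized sup-inf
problem `Φ(x) = (min_{a≠0} g_a(x_a)) / (c₀ + Σ_{a≠0} c_a x_a)` over the
nonnegative orthant, all the functions `g_a` are equalized. Arm `0` plays
the role of arm 1; each `g_a` (for `a ≠ 0`) is continuous and strictly
increasing on `[0,∞)` with `g_a(0) = 0`. -/
theorem equalization_at_optimum
    (K : ℕ) [NeZero K] (hK : 2 ≤ K)
    (c : Fin K → ℝ) (hc : ∀ a, 0 < c a)
    (g : Fin K → ℝ → ℝ)
    (hg_cont : ∀ a, a ≠ 0 → ContinuousOn (g a) (Set.Ici 0))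
    (hg_mono : ∀ a, a ≠ 0 → StrictMonoOn (g a) (Set.Ici 0))
    (hg_zero : ∀ a, a ≠ 0 → g a 0 = 0)
    (Φ : (Fin K → ℝ) → ℝ)
    (hΦ : Φ = fun x =>
      sInf {v : ℝ | ∃ a, a ≠ 0 ∧ v = g a (x a)} /
        (c 0 + ∑ a ∈ Finset.univ.erase 0, c a * x a))
    (xstar : Fin K → ℝ)
    (hxstar_nonneg : ∀ a, a ≠ 0 → 0 ≤ xstar a)
    (hmax : ∀ x : Fin K → ℝ, (∀ a, a ≠ 0 → 0 ≤ x a) → Φ x ≤ Φ xstar) :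
    ∀ a b : Fin K, a ≠ 0 → b ≠ 0 → g a (xstar a) = g b (xstar b) := by
  have hne : ∀ x : Fin K → ℝ, {v : ℝ | ∃ a : Fin K, a ≠ 0 ∧ v = g a (x a)}.Nonempty := by
    intro x
    refine ⟨_, ⟨1, by omega⟩, ?_, rfl⟩
    intro h
    have := congrArg Fin.val h
    simp at this
  have hfin : ∀ x : Fin K → ℝ, {v : ℝ | ∃ a : Fin K, a ≠ 0 ∧ v = g a (x a)}.Finite := by
    intro x
    refine (Set.finite_range (fun a => g a (x a))).subset ?_
    rintro v ⟨a, _, rfl⟩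
    exact ⟨a, rfl⟩
  have hden : ∀ x : Fin K → ℝ, (∀ a, a ≠ 0 → 0 ≤ x a) →
      0 < c 0 + ∑ a ∈ Finset.univ.erase 0, c a * x a := by
    intro x hx
    refine add_pos_of_pos_of_nonneg (hc 0) (Finset.sum_nonneg ?_)
    intro a ha
    exact mul_nonneg (hc a).le (hx a (Finset.ne_of_mem_erase ha))
  subst hΦ
  have hm : 0 < sInf {v : ℝ | ∃ a : Fin K, a ≠ 0 ∧ v = g a (xstar a)} := by
    have h1 := hmax (fun _ => 1) (fun _ _ => zero_le_one)
    have h2 : 0 < sInf {v : ℝ | ∃ a : Fin K, a ≠ 0 ∧ v = g a ((fun _ => (1:ℝ)) a)} := by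
      obtain ⟨a, ha, hv⟩ := (hne (fun _ => 1)).csInf_mem (hfin _)
      rw [hv, ← hg_zero a ha]
      exact hg_mono a ha (by simp) (by simp) one_pos
    have h3 := (div_pos h2 (hden (fun _ => 1) (fun _ _ => zero_le_one))).trans_le h1
    exact (div_pos_iff_of_pos_right (hden xstar hxstar_nonneg)).1 h3
  have key : ∀ b : Fin K, b ≠ 0 →
      g b (xstar b) = sInf {v : ℝ | ∃ a : Fin K, a ≠ 0 ∧ v = g a (xstar a)} := by
    intro b hb
    have hle : ∀ a : Fin K, a ≠ 0 →
        sInf {v : ℝ | ∃ a : Fin K, a ≠ 0 ∧ v = g a (xstar a)} ≤ g a (xstar a) :=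
      fun a ha => csInf_le (hfin _).bddBelow ⟨a, ha, rfl⟩
    by_contra hcon
    have hlt := lt_of_le_of_ne (hle b hb) (Ne.symm hcon)
    obtain ⟨y, ⟨hy0, hy1⟩, hy⟩ := intermediate_value_Icc (hxstar_nonneg b hb)
      ((hg_cont b hb).mono Set.Icc_subset_Ici_self)
      (show _ ∈ Set.Icc (g b 0) (g b (xstar b)) from ⟨by rw [hg_zero b hb]; exact hm.le, hlt.le⟩)
    have hylt : y < xstar b := by
      refine lt_of_le_of_ne hy1 ?_
      rintro rfl
      exact hcon hy
    have hx : ∀ a, a ≠ 0 → 0 ≤ Function.update xstar b y a := by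
      intro a ha
      by_cases h : a = b
      · subst h; simpa using hy0
      · simpa [h] using hxstar_nonneg a ha
    have h1 := hmax _ hx
    have h2 : sInf {v : ℝ | ∃ a : Fin K, a ≠ 0 ∧ v = g a (xstar a)} ≤
        sInf {v : ℝ | ∃ a : Fin K, a ≠ 0 ∧ v = g a (Function.update xstar b y a)} := by
      refine le_csInf (hne _) ?_
      rintro v ⟨a, ha, rfl⟩
      by_cases h : a = b
      · subst h; simpa using hy.ge
      · simpa [h] using hle a ha
    have h3 : c 0 + ∑ a ∈ Finset.univ.erase 0, c a * Function.update xstar b y a <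
        c 0 + ∑ a ∈ Finset.univ.erase 0, c a * xstar a := by
      refine (add_lt_add_iff_left _).2 (Finset.sum_lt_sum ?_ ⟨b, by simp [hb], ?_⟩)
      · intro a _
        refine mul_le_mul_of_nonneg_left ?_ (hc a).le
        by_cases h : a = b
        · subst h; simpa using hy1
        · simp [h]
      · simpa using mul_lt_mul_of_pos_left hylt (hc b)
    exact absurd h1 (not_le.2 (div_lt_div₀' h2 h3 (hm.trans_le h2) (hden _ hx)))
  intro a b ha hb
  rw [key a ha, key b hb]
end

section
/- Let K ≥ 2, ℓ ∈ (0,1], and ε > 0. Consider a sequence of arm pulls (a_t)_{t≥1} with a_t ∈ {1,…,K} and per-round costs C_t ∈ [ℓ,1]; let N_a(t) = Σ_{s≤t}1{a_s=a}, ĉ_a(t) = (1/N_a(t))·Σ_{s≤t}C_s·1{a_s=a} (each arm pulled once in the first K rounds), and J(t) = Σ_{s≤t}C_s = Σ_a ĉ_a(t)N_a(t). Let (ŵ*(t))_{t≥K} be a sequence in the simplex Σ_K and w* ∈ Σ_K. Assume that for every t ≥ K, a_{t+1} satisfies either N_{a_{t+1}}(t) ≤ √t or a_{t+1} ∈ argmax_a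 ( J(t)·ŵ*_a(t) − ĉ_a(t)·N_a(t) ), and that there exists t₀ such that max_a |ŵ*_a(t) − w*_a| < ε for all t ≥ t₀. Then there exists t_ε ≥ t₀ such that for all t ≥ t_ε, max_a | ĉ_a(t)·N_a(t)/J(t) − w*_a | ≤ 3(K−1)ε. (Lemma 16: the largest-deficit-first tracking rule keeps the empirical cost proportions within 3(K−1)ε of w* once the plug-in proportions are within ε.) -/
/-- Lemma 16: the largest-deficit-first tracking rule keeps
the empirical cost proportions within `3(K−1)ε` of `w*` once the plug-in
proportions are within `ε`. At each round `t ≥ K`, the pulled arm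
`a_{t+1}` either satisfies `N_{a_{t+1}}(t) ≤ √t` (forced exploration) or
maximizes the cost deficit `J(t)·ŵ*_a(t) − ĉ_a(t)·N_a(t)`. Costs lie in
`[ℓ,1]`. -/
theorem tracking_lemma
    (K : ℕ) (hK : 2 ≤ K) (ℓ : ℝ) (hℓ : ℓ ∈ Set.Ioc (0 : ℝ) 1) (ε : ℝ) (hε : 0 < ε)
    (pull : ℕ → Fin K) (C : ℕ → ℝ)
    (hC : ∀ t : ℕ, 1 ≤ t → C t ∈ Set.Icc ℓ 1)
    (what : ℕ → Fin K → ℝ) (wstar : Fin K → ℝ) (t₀ : ℕ) :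
    let N : Fin K → ℕ → ℕ := fun b t => ((Finset.Icc 1 t).filter fun s => pull s = b).card
    let chat : Fin K → ℕ → ℝ := fun b t =>
      (∑ s ∈ (Finset.Icc 1 t).filter fun s => pull s = b, C s) / (N b t : ℝ)
    let J : ℕ → ℝ := fun t => ∑ s ∈ Finset.Icc 1 t, C s
    (∀ b : Fin K, pull (b.val + 1) = b) →
    (∀ t : ℕ, K ≤ t → (∀ b, 0 ≤ what t b) ∧ ∑ b, what t b = 1) →
    ((∀ b, 0 ≤ wstar b) ∧ ∑ b, wstar b = 1) →
    (∀ t : ℕ, K ≤ t →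
      ((N (pull (t + 1)) t : ℝ) ≤ Real.sqrt t ∨
        ∀ b : Fin K, J t * what t b - chat b t * (N b t : ℝ) ≤
          J t * what t (pull (t + 1)) - chat (pull (t + 1)) t * (N (pull (t + 1)) t : ℝ))) →
    (∀ t : ℕ, t₀ ≤ t → ∀ b : Fin K, |what t b - wstar b| < ε) →
    ∃ tε : ℕ, t₀ ≤ tε ∧ ∀ t : ℕ, tε ≤ t → ∀ b : Fin K,
      |chat b t * (N b t : ℝ) / J t - wstar b| ≤ 3 * ((K : ℝ) - 1) * ε := by
  intro N chat J hinit hwhat hwstar htrack hclose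
  obtain ⟨hℓ0, hℓ1⟩ := hℓ
  let S : Fin K → ℕ → ℝ := fun b t => ∑ s ∈ (Finset.Icc 1 t).filter fun s => pull s = b, C s
  have hCN : ∀ b t, chat b t * (N b t : ℝ) = S b t := by
    intro b t
    by_cases h : N b t = 0
    · have h2 : (Finset.Icc 1 t).filter (fun s => pull s = b) = ∅ := Finset.card_eq_zero.mp h
      simp only [h, S, h2]
      simp
    · have h' : (N b t : ℝ) ≠ 0 := by exact_mod_cast h
      exact div_mul_cancel₀ _ h'
  simp only [hCN] at htrack ⊢
  have hSN : ∀ b t, S b t ≤ N b t := by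
    intro b t
    have := Finset.sum_le_card_nsmul ((Finset.Icc 1 t).filter fun s => pull s = b) C 1
      (fun s hs => (hC s (Finset.mem_Icc.mp (Finset.mem_filter.mp hs).1).1).2)
    simpa [S, N] using this
  have hNt : ∀ b t, (N b t : ℝ) ≤ t := by
    intro b t
    have : N b t ≤ (Finset.Icc 1 t).card := Finset.card_filter_le _ _
    simp at this
    exact_mod_cast this
  have hJS : ∀ t, ∑ b, S b t = J t := by
    intro t
    exact Finset.sum_fiberwise (Finset.Icc 1 t) pull C
  have hJl : ∀ t : ℕ, ℓ * t ≤ J t := by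
    intro t
    have := Finset.card_nsmul_le_sum (Finset.Icc 1 t) C ℓ
      (fun s hs => (hC s (Finset.mem_Icc.mp hs).1).1)
    simp at this
    simp only [J]
    linarith
  have hJs : ∀ t, J (t+1) = J t + C (t+1) := by
    intro t
    exact Finset.sum_Icc_succ_top (by omega) C
  have hSs : ∀ b t, S b (t+1) = S b t + if pull (t+1) = b then C (t+1) else 0 := by
    intro b t
    simp only [S, Finset.sum_filter]
    exact Finset.sum_Icc_succ_top (by omega) _
  have hK0 : Nonempty (Fin K) := ⟨⟨0, by omega⟩⟩
  set T := max K t₀ with hT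
  have key : ∀ b t, T ≤ t → S b t ≤ J t * (wstar b + ε) + Real.sqrt t + T + 1 := by
    intro b t ht
    have hwb : 0 ≤ wstar b + ε := by linarith [hwstar.1 b]
    induction t, ht using Nat.le_induction with
    | base =>
      have h1 := hSN b T
      have h2 := hNt b T
      have h3 : 0 ≤ J T := le_trans (by positivity) (hJl T)
      have := mul_nonneg h3 hwb
      have := Real.sqrt_nonneg (T : ℝ)
      linarith
    | succ t ht ih =>
      have hc := hC (t+1) (by omega)
      have hsq : Real.sqrt (t : ℝ) ≤ Real.sqrt ((t+1 : ℕ) : ℝ) :=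
        Real.sqrt_le_sqrt (by push_cast; linarith)
      have hJm : J t * (wstar b + ε) ≤ J (t+1) * (wstar b + ε) := by
        apply mul_le_mul_of_nonneg_right _ hwb
        rw [hJs]; linarith [hc.1]
      have hJ0 : 0 ≤ J t := le_trans (by positivity) (hJl t)
      rw [hSs]
      have hTn : (0:ℝ) ≤ T := by positivity
      have hs0 := Real.sqrt_nonneg (t : ℝ)
      have hm := mul_nonneg hJ0 hwb
      split_ifs with hp
      · have hKt : K ≤ t := le_trans (le_max_left _ _) ht
        have h0t : t₀ ≤ t := le_trans (le_max_right _ _) ht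
        rcases htrack t hKt with h | h
        · rw [hp] at h
          have := hSN b t
          linarith [hc.2]
        · rw [hp] at h
          have hsum : ∑ c, (J t * what t c - S c t) = 0 := by
            rw [Finset.sum_sub_distrib, ← Finset.mul_sum, (hwhat t hKt).2, hJS]; ring
          have hge : 0 ≤ J t * what t b - S b t := by
            by_contra hneg
            push Not at hneg
            have : ∑ c, (J t * what t c - S c t) < 0 :=
              Finset.sum_neg (fun c _ => lt_of_le_of_lt (h c) hneg) Finset.univ_nonempty
            linarith
          have h1 := (abs_lt.mp (hclose t h0t b)).2
          have : J t * what t b ≤ J t * (wstar b + ε) :=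
            mul_le_mul_of_nonneg_left (by linarith) hJ0
          linarith [hc.2]
      · linarith
  have hδ : 0 < ε * ℓ := mul_pos hε hℓ0
  obtain ⟨M, hM⟩ := exists_nat_ge (max ((2/(ε*ℓ))^2) (2*(T+1)/(ε*ℓ)))
  refine ⟨max (max T M) 1, le_trans (le_max_right K t₀)
    (le_trans (le_max_left _ _) (le_max_left _ _)), ?_⟩
  intro t ht
  have hTt : T ≤ t := by omega
  have hMt : (M : ℝ) ≤ t := by exact_mod_cast (by omega : M ≤ t)
  have ht1 : (1 : ℝ) ≤ t := by exact_mod_cast (by omega : 1 ≤ t)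
  have hJ : 0 < J t := lt_of_lt_of_le (by positivity) (hJl t)
  have hs : Real.sqrt t ≤ ε * ℓ * t / 2 := by
    have h1 : 2/(ε*ℓ) ≤ Real.sqrt t := Real.le_sqrt_of_sq_le
      (le_trans (le_max_left _ _) (le_trans hM hMt))
    rw [div_le_iff₀ hδ] at h1
    have h2 := Real.mul_self_sqrt (by linarith : (0:ℝ) ≤ t)
    have h3 := Real.sqrt_nonneg (t : ℝ)
    nlinarith
  have hs2 : (T:ℝ) + 1 ≤ ε * ℓ * t / 2 := by
    have h1 : 2*((T:ℝ)+1)/(ε*ℓ) ≤ t := le_trans (le_max_right _ _) (le_trans hM hMt)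
    rw [div_le_iff₀ hδ] at h1
    linarith
  have hup : ∀ b, S b t ≤ J t * (wstar b + 2 * ε) := by
    intro b
    have h1 := key b t hTt
    have h2 := mul_le_mul_of_nonneg_left (hJl t) hε.le
    linarith
  have hK2 : (2:ℝ) ≤ K := by exact_mod_cast hK
  intro b
  have hlow : J t * (wstar b - 2 * (K - 1) * ε) ≤ S b t := by
    have h1 : ∑ c ∈ Finset.univ.erase b, S c t
        ≤ ∑ c ∈ Finset.univ.erase b, J t * (wstar c + 2 * ε) :=
      Finset.sum_le_sum (fun c _ => hup c)
    have h2 := Finset.add_sum_erase Finset.univ (fun c => S c t) (Finset.mem_univ b)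
    have h3 := Finset.add_sum_erase Finset.univ (fun c => J t * (wstar c + 2 * ε))
      (Finset.mem_univ b)
    have h4 : ∑ c, J t * (wstar c + 2 * ε) = J t * (1 + K * (2 * ε)) := by
      rw [← Finset.mul_sum, Finset.sum_add_distrib, hwstar.2]; simp
    have h5 := hJS t
    linarith
  have hKε : 0 ≤ ((K:ℝ) - 2) * ε := mul_nonneg (by linarith) hε.le
  have e1 : S b t / J t ≤ wstar b + 2 * ε := by
    rw [div_le_iff₀ hJ]; linarith [hup b]
  have e2 : wstar b - 2 * (K - 1) * ε ≤ S b t / J t := by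
    rw [le_div_iff₀ hJ]; linarith
  rw [abs_le]
  constructor <;> linarith
end
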